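/- Assume additionally that the intrinsic diameter sup{d_H(x,y) : x,y ∈ Ω̄} is finite. Define v(x) := inf_{y∈∂Ω} (ψ(y) + d_H(y,x)), and let K be the set of all functions z : Ω̄ → ℝ such that z(y) − z(x) ≤ d_H(x,y) for all x,y ∈ Ω̄ and φ(x) ≤ z(x) ≤ ψ(x) for all x ∈ ∂Ω. Then: (i) v ∈ K; (ii) every z ∈ K satisfies z ≤ v pointwise on Ω̄ (so v is the maximal element of K); and (iii) v maximizes z ↦ ∫_Ω z(x) dx over K, and any maximizer of this integral over K coincides with v on Ω. -/

import Mathlib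

/-!
The function `v` is a McShane-type extension: it is the largest function that is `1`-Lipschitz for
the quasi-metric `d_H` and lies below `ψ` on `∂Ω`. Besides the compatibility
condition and the lower bound of `ψ` on the compact nonempty set `∂Ω`, this only uses that `d_H`
is finite, vanishes on the diagonal and satisfies the triangle inequality. The triangle inequality
(`finslerDist_triangle`) is the substantial one: two Lipschitz curves are concatenated and run at
double speed, homogeneity of `H` makes the length invariant under this reparametrisation, and
integrability of the length density (`intervalIntegrable_length`) makes the length additive.

For the integral statement, every `z` in the class is bounded because the intrinsic diameter is
finite, and continuous on `Ω` because `d_H(x, y) ≤ b ‖y - x‖` whenever the segment from `x` to `y`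
stays in `Ω̄` (`finslerDist_le_of_segment`). Hence `z` and `v` are integrable, `z ≤ v` integrates to
the inequality of volumes, and equality of volumes forces `z = v` a.e., so everywhere on the open
set `Ω` by continuity.
-/

open MeasureTheory ENNReal NNReal

/-- The intrinsic (Finsler) distance associated with a Finsler metric `H` on a set `S`:
the infimum of the lengths `∫₀¹ H(ξ(t), ξ'(t)) dt` over Lipschitz curves `ξ` joining
`x` to `y` inside `S` (valued in `ℝ≥0∞`; it is `∞` when no such curve exists). -/
noncomputable def finslerDist {N : ℕ}
    (H : EuclideanSpace ℝ (Fin N) → EuclideanSpace ℝ (Fin N) → ℝ)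
    (S : Set (EuclideanSpace ℝ (Fin N))) (x y : EuclideanSpace ℝ (Fin N)) : ℝ≥0∞ :=
  sInf {c : ℝ≥0∞ | ∃ ξ : ℝ → EuclideanSpace ℝ (Fin N),
    (∃ K : NNReal, LipschitzOnWith K ξ (Set.Icc 0 1)) ∧
    (∀ t ∈ Set.Icc (0 : ℝ) 1, ξ t ∈ S) ∧ ξ 0 = x ∧ ξ 1 = y ∧
    c = ENNReal.ofReal (∫ t in (0 : ℝ)..1, H (ξ t) (deriv ξ t))}

/-- The length density of a Lipschitz curve in a closed set is integrable: it is bounded, and it is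
measurable because `deriv` of any function on `ℝ` is measurable. -/
lemma intervalIntegrable_length {N : ℕ}
    {H : EuclideanSpace ℝ (Fin N) → EuclideanSpace ℝ (Fin N) → ℝ}
    {S : Set (EuclideanSpace ℝ (Fin N))} (hS : IsClosed S) {b : ℝ} (hb : 0 ≤ b)
    (Hcont : ContinuousOn
      (fun q : EuclideanSpace ℝ (Fin N) × EuclideanSpace ℝ (Fin N) => H q.1 q.2)
      (S ×ˢ Set.univ))
    (Hbd : ∀ x ∈ S, ∀ p, 0 ≤ H x p ∧ H x p ≤ b * ‖p‖)
    {ξ : ℝ → EuclideanSpace ℝ (Fin N)} {K : ℝ≥0} (hK : LipschitzOnWith K ξ (Set.Icc 0 1))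
    (hξ : ∀ t ∈ Set.Icc (0 : ℝ) 1, ξ t ∈ S) :
    IntervalIntegrable (fun t => H (ξ t) (deriv ξ t)) volume 0 1 := by
  classical
  rw [intervalIntegrable_iff_integrableOn_Ioo_of_le zero_le_one]
  -- Extending `H` by zero outside the closed set `S` makes it globally measurable.
  set G : EuclideanSpace ℝ (Fin N) × EuclideanSpace ℝ (Fin N) → ℝ :=
    (S ×ˢ Set.univ).piecewise (fun q => H q.1 q.2) (fun _ => 0) with hG
  have hGm : Measurable G :=
    Hcont.measurable_piecewise continuousOn_const (hS.measurableSet.prod MeasurableSet.univ)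
  have hξm : AEMeasurable ξ (volume.restrict (Set.Ioo 0 1)) :=
    (hK.continuousOn.mono Set.Ioo_subset_Icc_self).aemeasurable measurableSet_Ioo
  have hm : AEMeasurable (fun t => G (ξ t, deriv ξ t)) (volume.restrict (Set.Ioo 0 1)) :=
    hGm.comp_aemeasurable (hξm.prodMk (measurable_deriv ξ).aemeasurable)
  have hm' : AEMeasurable (fun t => H (ξ t) (deriv ξ t)) (volume.restrict (Set.Ioo 0 1)) := by
    refine hm.congr ?_
    refine (ae_restrict_iff' measurableSet_Ioo).2 (Filter.Eventually.of_forall fun t ht => ?_)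
    have : (ξ t, deriv ξ t) ∈ S ×ˢ (Set.univ : Set (EuclideanSpace ℝ (Fin N))) :=
      ⟨hξ t (Set.Ioo_subset_Icc_self ht), trivial⟩
    simp only [hG, Set.piecewise_eq_of_mem _ _ _ this]
  refine IntegrableOn.of_bound (C := b * K) (by simp) hm'.aestronglyMeasurable ?_
  refine (ae_restrict_iff' measurableSet_Ioo).2 (Filter.Eventually.of_forall fun t ht => ?_)
  have h1 := Hbd _ (hξ t (Set.Ioo_subset_Icc_self ht)) (deriv ξ t)
  have h2 : ‖deriv ξ t‖ ≤ K := norm_deriv_le_of_lipschitzOn (Icc_mem_nhds ht.1 ht.2) hK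
  rw [Real.norm_of_nonneg h1.1]
  exact h1.2.trans (mul_le_mul_of_nonneg_left h2 hb)

/-- Concatenation of Lipschitz curves: lengths add up. -/
lemma exists_concat {N : ℕ}
    {H : EuclideanSpace ℝ (Fin N) → EuclideanSpace ℝ (Fin N) → ℝ}
    {S : Set (EuclideanSpace ℝ (Fin N))} (hS : IsClosed S) {b : ℝ} (hb : 0 ≤ b)
    (Hcont : ContinuousOn
      (fun q : EuclideanSpace ℝ (Fin N) × EuclideanSpace ℝ (Fin N) => H q.1 q.2)
      (S ×ˢ Set.univ))
    (Hhom : ∀ x ∈ S, ∀ t : ℝ, 0 ≤ t → ∀ p, H x (t • p) = t * H x p)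
    (Hbd : ∀ x ∈ S, ∀ p, 0 ≤ H x p ∧ H x p ≤ b * ‖p‖)
    {ξ η : ℝ → EuclideanSpace ℝ (Fin N)} {K L : ℝ≥0}
    (hK : LipschitzOnWith K ξ (Set.Icc 0 1)) (hξ : ∀ t ∈ Set.Icc (0 : ℝ) 1, ξ t ∈ S)
    (hL : LipschitzOnWith L η (Set.Icc 0 1)) (hη : ∀ t ∈ Set.Icc (0 : ℝ) 1, η t ∈ S)
    (hξη : ξ 1 = η 0) :
    ∃ ζ : ℝ → EuclideanSpace ℝ (Fin N), (∃ M : ℝ≥0, LipschitzOnWith M ζ (Set.Icc 0 1)) ∧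
      (∀ t ∈ Set.Icc (0 : ℝ) 1, ζ t ∈ S) ∧ ζ 0 = ξ 0 ∧ ζ 1 = η 1 ∧
      ∫ t in (0 : ℝ)..1, H (ζ t) (deriv ζ t) =
        (∫ t in (0 : ℝ)..1, H (ξ t) (deriv ξ t)) + ∫ t in (0 : ℝ)..1, H (η t) (deriv η t) := by
  -- `c` clamps to `[0, 1]`; writing the concatenation as a sum of clamped curves makes its
  -- Lipschitz continuity immediate.
  set c : ℝ → ℝ := fun t => (Set.projIcc (0 : ℝ) 1 zero_le_one t : ℝ) with hc
  have hcL : LipschitzWith 1 c := by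
    rw [← mul_one (1 : ℝ≥0)]
    exact (LipschitzWith.subtype_val _).comp (LipschitzWith.projIcc zero_le_one)
  have hcm : ∀ t, c t ∈ Set.Icc (0 : ℝ) 1 := fun t => (Set.projIcc (0 : ℝ) 1 zero_le_one t).2
  have hc1 : ∀ t, 0 ≤ t → t ≤ 1 → c t = t := fun t h0 h1 => by
    simp only [hc, Set.projIcc_of_mem zero_le_one ⟨h0, h1⟩]
  have hc0 : ∀ t, t ≤ 0 → c t = 0 := fun t h => by
    simp only [hc, Set.projIcc_of_le_left zero_le_one h]
  have hc2 : ∀ t, 1 ≤ t → c t = 1 := fun t h => by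
    simp only [hc, Set.projIcc_of_right_le zero_le_one h]
  set ζ : ℝ → EuclideanSpace ℝ (Fin N) :=
    fun t => ξ (c (2 * t)) + η (c (2 * t - 1)) - η 0 with hζ
  have hleft : ∀ t, 0 ≤ t → t ≤ 1 / 2 → ζ t = ξ (2 * t) := fun t h0 h1 => by
    simp only [hζ]
    rw [hc1 _ (by linarith) (by linarith), hc0 _ (by linarith), add_sub_cancel_right]
  have hright : ∀ t, 1 / 2 ≤ t → t ≤ 1 → ζ t = η (2 * t - 1) := fun t h0 h1 => by
    simp only [hζ]
    rw [hc2 (2 * t) (by linarith), hc1 _ (by linarith) (by linarith), hξη, add_sub_cancel_left]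
  have hmul : LipschitzWith 2 (fun t : ℝ => 2 * t) :=
    LipschitzWith.of_dist_le_mul fun s t => by
      simp [Real.dist_eq, ← mul_sub, abs_mul]
  have hmul' : LipschitzWith 2 (fun t : ℝ => 2 * t - 1) :=
    LipschitzWith.of_dist_le_mul fun s t => by
      simp [Real.dist_eq, ← mul_sub, abs_mul]
  have hξL : LipschitzOnWith (K * (1 * 2)) (fun t => ξ (c (2 * t))) (Set.Icc 0 1) :=
    hK.comp ((hcL.comp hmul).lipschitzOnWith) fun t _ => hcm _
  have hηL : LipschitzOnWith (L * (1 * 2)) (fun t => η (c (2 * t - 1))) (Set.Icc 0 1) :=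
    hL.comp ((hcL.comp hmul').lipschitzOnWith) fun t _ => hcm _
  have hζL : LipschitzOnWith (K * (1 * 2) + L * (1 * 2) + 0) ζ (Set.Icc 0 1) :=
    (hξL.add hηL).sub (LipschitzWith.const (η 0)).lipschitzOnWith
  have hζS : ∀ t ∈ Set.Icc (0 : ℝ) 1, ζ t ∈ S := fun t ht => by
    rcases le_total t (1 / 2) with h | h
    · rw [hleft t ht.1 h]; exact hξ _ ⟨by linarith [ht.1], by linarith⟩
    · rw [hright t h ht.2]; exact hη _ ⟨by linarith, by linarith [ht.2]⟩
  refine ⟨ζ, ⟨_, hζL⟩, hζS, by rw [hleft 0 le_rfl (by norm_num)]; simp,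
    by rw [hright 1 (by norm_num) le_rfl]; norm_num, ?_⟩
  have hint := intervalIntegrable_length hS hb Hcont Hbd hζL hζS
  have h1 : ∫ t in (0 : ℝ)..(1 / 2), H (ζ t) (deriv ζ t) =
      ∫ t in (0 : ℝ)..1, H (ξ t) (deriv ξ t) := by
    have : ∫ t in (0 : ℝ)..(1 / 2), H (ζ t) (deriv ζ t) =
        ∫ t in (0 : ℝ)..(1 / 2), 2 * (fun s => H (ξ s) (deriv ξ s)) (2 * t) := by
      refine intervalIntegral.integral_congr_Ioo_of_le (by norm_num) fun t ht => ?_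
      have hd : deriv ζ t = (2 : ℝ) • deriv ξ (2 * t) := by
        rw [← deriv_comp_mul_left]
        refine Filter.EventuallyEq.deriv_eq ?_
        filter_upwards [Ioo_mem_nhds ht.1 ht.2] with s hs using hleft s hs.1.le hs.2.le
      simp only
      rw [hd, hleft t ht.1.le ht.2.le,
        Hhom _ (hξ _ ⟨by linarith [ht.1], by linarith [ht.2]⟩) 2 zero_le_two]
    rw [this, intervalIntegral.integral_const_mul,
      intervalIntegral.mul_integral_comp_mul_left (f := fun s => H (ξ s) (deriv ξ s))]
    norm_num
  have h2 : ∫ t in (1 / 2 : ℝ)..1, H (ζ t) (deriv ζ t) =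
      ∫ t in (0 : ℝ)..1, H (η t) (deriv η t) := by
    have : ∫ t in (1 / 2 : ℝ)..1, H (ζ t) (deriv ζ t) =
        ∫ t in (1 / 2 : ℝ)..1, 2 * (fun s => H (η s) (deriv η s)) (2 * t - 1) := by
      refine intervalIntegral.integral_congr_Ioo_of_le (by norm_num) fun t ht => ?_
      have hd : deriv ζ t = (2 : ℝ) • deriv η (2 * t - 1) := by
        have h := deriv_comp_mul_left (2 : ℝ) (fun s => η (s - 1)) t
        rw [deriv_comp_sub_const] at h
        rw [← h]
        refine Filter.EventuallyEq.deriv_eq ?_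
        filter_upwards [Ioo_mem_nhds ht.1 ht.2] with s hs using hright s hs.1.le hs.2.le
      simp only
      rw [hd, hright t ht.1.le ht.2.le,
        Hhom _ (hη _ ⟨by linarith [ht.1], by linarith [ht.2]⟩) 2 zero_le_two]
    rw [this, intervalIntegral.integral_const_mul,
      intervalIntegral.mul_integral_comp_mul_sub (f := fun s => H (η s) (deriv η s))]
    norm_num
  rw [← h1, ← h2, intervalIntegral.integral_add_adjacent_intervals]
  · exact hint.mono_set (by
      rw [Set.uIcc_of_le (by norm_num), Set.uIcc_of_le (by norm_num)]
      exact Set.Icc_subset_Icc le_rfl (by norm_num))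
  · exact hint.mono_set (by
      rw [Set.uIcc_of_le (by norm_num), Set.uIcc_of_le (by norm_num)]
      exact Set.Icc_subset_Icc (by norm_num) le_rfl)

lemma finslerDist_triangle {N : ℕ}
    {H : EuclideanSpace ℝ (Fin N) → EuclideanSpace ℝ (Fin N) → ℝ}
    {S : Set (EuclideanSpace ℝ (Fin N))} (hS : IsClosed S) {b : ℝ} (hb : 0 ≤ b)
    (Hcont : ContinuousOn
      (fun q : EuclideanSpace ℝ (Fin N) × EuclideanSpace ℝ (Fin N) => H q.1 q.2)
      (S ×ˢ Set.univ))
    (Hhom : ∀ x ∈ S, ∀ t : ℝ, 0 ≤ t → ∀ p, H x (t • p) = t * H x p)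
    (Hbd : ∀ x ∈ S, ∀ p, 0 ≤ H x p ∧ H x p ≤ b * ‖p‖)
    (x y z : EuclideanSpace ℝ (Fin N)) :
    finslerDist H S x z ≤ finslerDist H S x y + finslerDist H S y z := by
  rw [finslerDist, finslerDist, finslerDist, ENNReal.sInf_add]
  refine le_iInf₂ fun p hp => ?_
  rw [add_comm, ENNReal.sInf_add]
  refine le_iInf₂ fun q hq => ?_
  obtain ⟨ξ, ⟨K, hK⟩, hξ, hξ0, hξ1, rfl⟩ := hp
  obtain ⟨η, ⟨L, hL⟩, hη, hη0, hη1, rfl⟩ := hq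
  obtain ⟨ζ, hM, hζ, hζ0, hζ1, hlen⟩ :=
    exists_concat hS hb Hcont Hhom Hbd hK hξ hL hη (hξ1.trans hη0.symm)
  rw [add_comm]
  refine le_trans (sInf_le ⟨ζ, hM, hζ, hζ0.trans hξ0, hζ1.trans hη1, rfl⟩) ?_
  rw [hlen]
  exact ENNReal.ofReal_add_le

/-- The length of a segment bounds the intrinsic distance of its endpoints. -/
lemma finslerDist_le_of_segment {N : ℕ}
    {H : EuclideanSpace ℝ (Fin N) → EuclideanSpace ℝ (Fin N) → ℝ}
    {S : Set (EuclideanSpace ℝ (Fin N))} {b : ℝ}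
    (Hbd : ∀ x ∈ S, ∀ p, 0 ≤ H x p ∧ H x p ≤ b * ‖p‖)
    {x y : EuclideanSpace ℝ (Fin N)} (hxy : segment ℝ x y ⊆ S) :
    finslerDist H S x y ≤ ENNReal.ofReal (b * ‖y - x‖) := by
  have hmem : ∀ t ∈ Set.Icc (0 : ℝ) 1, AffineMap.lineMap x y t ∈ S := fun t ht =>
    hxy (segment_eq_image_lineMap ℝ x y ▸ Set.mem_image_of_mem _ ht)
  refine le_trans (sInf_le ⟨fun t => AffineMap.lineMap x y t,
    ⟨_, (lipschitzWith_lineMap x y).lipschitzOnWith⟩, hmem, by simp, by simp, rfl⟩) ?_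
  refine ENNReal.ofReal_le_ofReal ((le_abs_self _).trans ?_)
  have h := intervalIntegral.norm_integral_le_of_norm_le_const (a := 0) (b := 1)
    (C := b * ‖y - x‖)
    (f := fun t : ℝ => H (AffineMap.lineMap x y t)
      (deriv (fun t : ℝ => AffineMap.lineMap x y t) t)) ?_
  · simpa using h
  · intro t ht
    rw [Set.uIoc_of_le zero_le_one] at ht
    have hd : deriv (fun t : ℝ => (AffineMap.lineMap x y t : EuclideanSpace ℝ (Fin N))) t
        = y - x := AffineMap.hasDerivAt_lineMap.deriv
    have h := Hbd _ (hmem t ⟨ht.1.le, ht.2⟩) (y - x)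
    rw [hd, Real.norm_of_nonneg h.1]
    exact h.2

/-- Assuming the intrinsic diameter is finite, the function
`v(x) = inf_{y ∈ ∂Ω} (ψ(y) + d_H(y,x))` is the maximal element of the class `K` of
functions that are `1`-Lipschitz w.r.t. `d_H` on `Ω̄` and satisfy `φ ≤ z ≤ ψ` on `∂Ω`,
and `v` is (up to a.e. equality on `Ω`, in fact everywhere on `Ω`) the unique maximizer
of `z ↦ ∫_Ω z` over `K`. -/
theorem maximal_volume_solution_double_obstacle (N : ℕ) (hN : 1 ≤ N)
    (Ω : Set (EuclideanSpace ℝ (Fin N)))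
    (hΩne : Ω.Nonempty) (hΩop : IsOpen Ω) (hΩbd : Bornology.IsBounded Ω)
    (a b : ℝ) (ha : 0 < a) (hab : a ≤ b)
    (H : EuclideanSpace ℝ (Fin N) → EuclideanSpace ℝ (Fin N) → ℝ)
    (Hcont : ContinuousOn
      (fun q : EuclideanSpace ℝ (Fin N) × EuclideanSpace ℝ (Fin N) => H q.1 q.2)
      (closure Ω ×ˢ Set.univ))
    (Hconv : ∀ x ∈ closure Ω, ConvexOn ℝ Set.univ (H x))
    (Hhom : ∀ x ∈ closure Ω, ∀ t : ℝ, 0 ≤ t → ∀ p, H x (t • p) = t * H x p)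
    (Hbd : ∀ x ∈ closure Ω, ∀ p, a * ‖p‖ ≤ H x p ∧ H x p ≤ b * ‖p‖)
    (hfin : (⨆ x ∈ closure Ω, ⨆ y ∈ closure Ω, finslerDist H (closure Ω) x y) ≠ ⊤)
    (φ ψ : EuclideanSpace ℝ (Fin N) → ℝ)
    (hφ : ContinuousOn φ (frontier Ω)) (hψ : ContinuousOn ψ (frontier Ω))
    (hcompat : ∀ x ∈ frontier Ω, ∀ y ∈ frontier Ω,
      φ x - ψ y ≤ (finslerDist H (closure Ω) y x).toReal)
    (v : EuclideanSpace ℝ (Fin N) → ℝ)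
    (hv : ∀ x, v x = sInf
      ((fun y => ψ y + (finslerDist H (closure Ω) y x).toReal) '' frontier Ω)) :
    -- (i) `v ∈ K`
    ((∀ x ∈ closure Ω, ∀ y ∈ closure Ω,
        v y - v x ≤ (finslerDist H (closure Ω) x y).toReal) ∧
      (∀ x ∈ frontier Ω, φ x ≤ v x ∧ v x ≤ ψ x)) ∧
    -- (ii) every `z ∈ K` satisfies `z ≤ v` on `Ω̄`
    (∀ z : EuclideanSpace ℝ (Fin N) → ℝ,
      (∀ x ∈ closure Ω, ∀ y ∈ closure Ω,
        z y - z x ≤ (finslerDist H (closure Ω) x y).toReal) →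
      (∀ x ∈ frontier Ω, φ x ≤ z x ∧ z x ≤ ψ x) →
      ∀ x ∈ closure Ω, z x ≤ v x) ∧
    -- (iii) `v` maximizes the volume over `K`, and any maximizer coincides with `v` on `Ω`
    (∀ z : EuclideanSpace ℝ (Fin N) → ℝ,
      (∀ x ∈ closure Ω, ∀ y ∈ closure Ω,
        z y - z x ≤ (finslerDist H (closure Ω) x y).toReal) →
      (∀ x ∈ frontier Ω, φ x ≤ z x ∧ z x ≤ ψ x) →
      (∫ x in Ω, z x) ≤ (∫ x in Ω, v x) ∧
        ((∫ x in Ω, z x) = (∫ x in Ω, v x) → ∀ x ∈ Ω, z x = v x)) := by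
  have hb : 0 ≤ b := ha.le.trans hab
  have Hbd' : ∀ x ∈ closure Ω, ∀ p, 0 ≤ H x p ∧ H x p ≤ b * ‖p‖ := fun x hx p =>
    ⟨(by positivity : (0 : ℝ) ≤ a * ‖p‖).trans (Hbd x hx p).1, (Hbd x hx p).2⟩
  set d : EuclideanSpace ℝ (Fin N) → EuclideanSpace ℝ (Fin N) → ℝ :=
    fun x y => (finslerDist H (closure Ω) x y).toReal with hd
  change ∀ x, v x = sInf ((fun y => ψ y + d y x) '' frontier Ω) at hv
  obtain ⟨D, hD⟩ : ∃ D, D = ⨆ x ∈ closure Ω, ⨆ y ∈ closure Ω, finslerDist H (closure Ω) x y :=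
    ⟨_, rfl⟩
  rw [← hD] at hfin
  have hleD : ∀ x ∈ closure Ω, ∀ y ∈ closure Ω, finslerDist H (closure Ω) x y ≤ D := by
    intro x hx y hy
    rw [hD]
    exact le_iSup₂_of_le x hx (le_iSup₂_of_le y hy le_rfl)
  have hne : ∀ x ∈ closure Ω, ∀ y ∈ closure Ω, finslerDist H (closure Ω) x y ≠ ⊤ :=
    fun x hx y hy => ne_top_of_le_ne_top hfin (hleD x hx y hy)
  have hd0 : ∀ x y, 0 ≤ d x y := fun x y => ENNReal.toReal_nonneg
  have hdD : ∀ x ∈ closure Ω, ∀ y ∈ closure Ω, d x y ≤ D.toReal := fun x hx y hy =>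
    ENNReal.toReal_mono hfin (hleD x hx y hy)
  have htri : ∀ x ∈ closure Ω, ∀ y ∈ closure Ω, ∀ z ∈ closure Ω, d x z ≤ d x y + d y z := by
    intro x hx y hy z hz
    simp only [hd]
    rw [← ENNReal.toReal_add (hne x hx y hy) (hne y hy z hz)]
    exact ENNReal.toReal_mono (ENNReal.add_ne_top.2 ⟨hne x hx y hy, hne y hy z hz⟩)
      (finslerDist_triangle isClosed_closure hb Hcont Hhom Hbd' x y z)
  have hseg : ∀ x y, segment ℝ x y ⊆ closure Ω → d x y ≤ b * ‖y - x‖ := fun x y hxy =>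
    ENNReal.toReal_le_of_le_ofReal (by positivity) (finslerDist_le_of_segment Hbd' hxy)
  have hself : ∀ x ∈ closure Ω, d x x ≤ 0 := fun x hx => by
    simpa using hseg x x (by simpa [segment_same] using hx)
  have hfr : frontier Ω ⊆ closure Ω := frontier_subset_closure
  have hfrne : (frontier Ω).Nonempty := by
    have : Nonempty (Fin N) := ⟨⟨0, hN⟩⟩
    refine nonempty_frontier_iff.2 ⟨hΩne, ?_⟩
    rintro rfl
    exact NormedSpace.unbounded_univ ℝ _ hΩbd
  -- `ψ` is bounded below on the compact set `∂Ω`, so the infimum defining `v` is a true one.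
  obtain ⟨m, hm⟩ : ∃ m, ∀ y ∈ frontier Ω, m ≤ ψ y := by
    have hcomp : IsCompact (frontier Ω) :=
      hΩbd.isCompact_closure.of_isClosed_subset isClosed_frontier hfr
    obtain ⟨m, hm⟩ := hcomp.bddBelow_image hψ
    exact ⟨m, fun y hy => hm (Set.mem_image_of_mem _ hy)⟩
  have hv_le : ∀ x, ∀ y ∈ frontier Ω, v x ≤ ψ y + d y x := fun x y hy => by
    rw [hv]
    refine csInf_le ⟨m, ?_⟩ (Set.mem_image_of_mem _ hy)
    rintro _ ⟨w, hw, rfl⟩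
    exact (hm w hw).trans (le_add_of_nonneg_right (hd0 w x))
  have le_hv : ∀ x r, (∀ y ∈ frontier Ω, r ≤ ψ y + d y x) → r ≤ v x := fun x r h => by
    rw [hv]
    refine le_csInf (hfrne.image _) ?_
    rintro _ ⟨w, hw, rfl⟩
    exact h w hw
  have hvLip : ∀ x ∈ closure Ω, ∀ y ∈ closure Ω, v y - v x ≤ d x y := fun x hx y hy => by
    have : v y - d x y ≤ v x := le_hv _ _ fun w hw => by
      linarith [hv_le y w hw, htri w (hfr hw) x hx y hy]
    linarith
  have hmax : ∀ z : EuclideanSpace ℝ (Fin N) → ℝ,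
      (∀ x ∈ closure Ω, ∀ y ∈ closure Ω, z y - z x ≤ d x y) →
      (∀ x ∈ frontier Ω, φ x ≤ z x ∧ z x ≤ ψ x) → ∀ x ∈ closure Ω, z x ≤ v x :=
    fun z hz hzb x hx => le_hv _ _ fun w hw => by
      linarith [hz w (hfr hw) x hx, (hzb w hw).2]
  -- A function that is `1`-Lipschitz for `d` is locally Lipschitz on `Ω`, as small balls are convex.
  have hcontOn : ∀ z : EuclideanSpace ℝ (Fin N) → ℝ,
      (∀ x ∈ closure Ω, ∀ y ∈ closure Ω, z y - z x ≤ d x y) → ContinuousOn z Ω := by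
    intro z hz x hx
    obtain ⟨r, hr, hball⟩ := Metric.isOpen_iff.1 hΩop x hx
    refine ContinuousAt.continuousWithinAt ?_
    refine continuousAt_of_locally_lipschitz hr b fun y hy => ?_
    have hxb : x ∈ Metric.ball x r := Metric.mem_ball_self hr
    have hyb : y ∈ Metric.ball x r := hy
    have hsub : Metric.ball x r ⊆ closure Ω := hball.trans subset_closure
    have h1 := hseg x y (((convex_ball x r).segment_subset hxb hyb).trans hsub)
    have h2 := hseg y x (((convex_ball x r).segment_subset hyb hxb).trans hsub)
    rw [norm_sub_rev] at h2
    have h3 := hz x (hsub hxb) y (hsub hyb)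
    have h4 := hz y (hsub hyb) x (hsub hxb)
    rw [Real.dist_eq, dist_eq_norm, abs_le]
    constructor <;> linarith
  have hinteg : ∀ z : EuclideanSpace ℝ (Fin N) → ℝ,
      (∀ x ∈ closure Ω, ∀ y ∈ closure Ω, z y - z x ≤ d x y) → IntegrableOn z Ω := by
    intro z hz
    obtain ⟨x₀, hx₀⟩ := hΩne
    refine IntegrableOn.of_bound (C := |z x₀| + D.toReal) hΩbd.measure_lt_top
      ((hcontOn z hz).aestronglyMeasurable hΩop.measurableSet) ?_
    refine (ae_restrict_iff' hΩop.measurableSet).2 (Filter.Eventually.of_forall fun x hx => ?_)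
    have hx' := subset_closure hx
    have hx₀' := subset_closure hx₀
    rw [Real.norm_eq_abs, abs_le]
    constructor <;> linarith [hz x hx' x₀ hx₀', hz x₀ hx₀' x hx', hdD x hx' x₀ hx₀',
      hdD x₀ hx₀' x hx', le_abs_self (z x₀), neg_abs_le (z x₀)]
  refine ⟨⟨hvLip, fun x hx => ⟨le_hv _ _ fun y hy => ?_, ?_⟩⟩, hmax, fun z hz hzb => ⟨?_, ?_⟩⟩
  · have h : φ x - ψ y ≤ d y x := hcompat x hx y hy
    linarith
  · linarith [hv_le x x hx, hself x (hfr hx)]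
  · exact setIntegral_mono_on (hinteg z hz) (hinteg v hvLip) hΩop.measurableSet
      fun x hx => hmax z hz hzb x (subset_closure hx)
  · intro heq
    have hle : z ≤ᵐ[volume.restrict Ω] v := (ae_restrict_iff' hΩop.measurableSet).2
      (Filter.Eventually.of_forall fun x hx => hmax z hz hzb x (subset_closure hx))
    have hae : z =ᵐ[volume.restrict Ω] v :=
      (integral_eq_iff_of_ae_le (hinteg z hz) (hinteg v hvLip) hle).1 heq
    exact Measure.eqOn_open_of_ae_eq hae hΩop (hcontOn z hz) (hcontOn v hvLip)
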